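/- Let G be a group of order p²q of type 10 (q | p+1, q > 2 odd prime, p odd prime), i.e., G = (C_p × C_p) ⋊ C_q where a generator b of C_q acts on A = C_p × C_p by a matrix Z of order q with determinant 1 and irreducible characteristic polynomial over F_p. Then there is no gamma function γ on G with |ker γ| = p. -/

import Mathlib

/-!
The image `S` of a gamma function `γ` is closed under multiplication, hence is a subgroup of the
finite group `Aut G`. All nonempty fibres of `γ` have the same size, so `|ker γ| = p` forces
`|S| = p q`. The theorem holds because `Aut G` has no subgroup of order `p q`.

Suppose there is one. Since `q < p`, it has a normal subgroup of order `p`, and as `q ∣ p + 1` and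
`q > 2` give `p ≢ 1 (mod q)`, an element `β` of order `q` commutes with some `σ` of order `p`
(`exists_commuting`). Neither `p` nor `q` divides `q - 1 = |Aut (G ⧸ A)|`, so both automorphisms act
trivially on `G ⧸ A` (`apply_mul_inv_mem`): write `σ b = a b` and `β b = c b` with `a, c ∈ A`. Both
then commute on `A` with conjugation by `b`, so by irreducibility each fixes `A` pointwise as soon
as it fixes one nontrivial element of `A` (`fixes_of_fixes_one`).

* `σ` has `p`-power order and `A` is a `p`-group, so `σ` has such a fixed point, and it fixes `A`.
  As `σ ≠ 1`, this gives `a ≠ 1`.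
* Comparing `σ (β b)` with `β (σ b)` gives `β a = a`, so `β` fixes `A` as well. Then
  `b = β ^ q b = c ^ q b`, so `c ^ q = 1 = c ^ p`, whence `c = 1` and `β = 1`, a contradiction.
-/

/-- Orbit counting: if `|H| ≢ 1 (mod r)`, the trivial element is not the only fixed point in `H` of
an automorphism `f` with `f ^ r = 1` that preserves `H`. -/
theorem exists_fixed_ne_one {M : Type*} [Group M] [Finite M] {r : ℕ} (hr : r.Prime)
    (H : Subgroup M) (f : MulAut M) (hf : f ^ r = 1) (hH : ∀ x, f x ∈ H ↔ x ∈ H)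
    (hc : ¬ Nat.card H ≡ 1 [MOD r]) : ∃ x ∈ H, x ≠ 1 ∧ f x = x := by
  classical
  have := Fact.mk hr
  have := Fintype.ofFinite H
  let g : Equiv.Perm H := Equiv.Perm.subtypePerm (MulAut.toPerm M f) hH
  have hg : g ^ r ^ 1 = 1 := by
    rw [pow_one]
    change Equiv.Perm.subtypePerm _ hH ^ r = 1
    rw [Equiv.Perm.subtypePerm_pow]
    ext x
    have h1 : (MulAut.toPerm M f) ^ r = 1 := by rw [← map_pow, hf, map_one]
    exact DFunLike.congr_fun h1 (x : M)
  have h1 := Equiv.Perm.card_compl_support_modEq hg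
  by_contra! hcon
  apply hc
  rw [Nat.card_eq_fintype_card]
  refine h1.symm.trans ?_
  have : g.supportᶜ = {1} := by
    ext x
    simp only [Finset.mem_compl, Equiv.Perm.mem_support, not_not, Finset.mem_singleton]
    constructor
    · intro hx
      by_contra hne
      exact hcon x x.2 (by simpa using hne) (congrArg Subtype.val hx)
    · rintro rfl
      ext
      exact map_one f
  rw [this, Finset.card_singleton]

theorem exists_commuting {S : Type*} [Group S] [Finite S] {p q : ℕ} (hp : p.Prime) (hq : q.Prime)
    (hlt : q < p) (hmod : ¬ p ≡ 1 [MOD q]) (hS : Nat.card S = p * q) :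
    ∃ σ β : S, orderOf σ = p ∧ orderOf β = q ∧ σ * β = β * σ := by
  have := Fact.mk hp
  have := Fact.mk hq
  obtain ⟨τ, hτ⟩ := exists_prime_orderOf_dvd_card' (G := S) p (hS ▸ dvd_mul_right _ _)
  obtain ⟨β, hβ⟩ := exists_prime_orderOf_dvd_card' (G := S) q (hS ▸ dvd_mul_left _ _)
  have hP : Nat.card (Subgroup.zpowers τ) = p := by rw [Nat.card_zpowers, hτ]
  -- The index `q` is the least prime factor of `p * q`.
  have hnorm : (Subgroup.zpowers τ).Normal := by
    apply Subgroup.normal_of_index_eq_minFac_card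
    have h := (Subgroup.zpowers τ).card_mul_index
    rw [hP, hS] at h
    rw [Nat.eq_of_mul_eq_mul_left hp.pos h, hS]
    have hm := Nat.minFac_prime (n := p * q)
      (fun h => hp.one_lt.ne' (Nat.eq_one_of_mul_eq_one_right h))
    have hle := Nat.minFac_le_of_dvd hq.two_le (dvd_mul_left q p)
    rcases hm.dvd_mul.1 (Nat.minFac_dvd (p * q)) with h | h
    · have := (Nat.prime_dvd_prime_iff_eq hm hp).1 h
      omega
    · exact ((Nat.prime_dvd_prime_iff_eq hm hq).1 h).symm
  obtain ⟨σ, hσ, hσ1, hfix⟩ := exists_fixed_ne_one hq (Subgroup.zpowers τ) (MulAut.conj β)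
    (by rw [← map_pow, ← hβ, pow_orderOf_eq_one, map_one])
    (fun x => by
      rw [MulAut.conj_apply]
      exact (hnorm.mem_comm_iff (a := β * x) (b := β⁻¹)).trans (by simp)) (by rwa [hP])
  refine ⟨σ, β, ?_, hβ, ?_⟩
  · refine orderOf_eq_prime ?_ hσ1
    exact orderOf_dvd_iff_pow_eq_one.1 (hP ▸ Subgroup.orderOf_dvd_natCard _ hσ)
  · rw [MulAut.conj_apply, mul_inv_eq_iff_eq_mul] at hfix
    exact hfix.symm

/-- If `f ^ r = 1` for a prime `r ≥ q`, then `f` acts trivially on an `f`-invariant quotient of prime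
order `q`, because the automorphism group of that quotient has order `q - 1`. -/
theorem apply_mul_inv_mem {G : Type*} [Group G] [Finite G] {q r : ℕ} (hq : q.Prime) (hr : r.Prime)
    (hqr : q ≤ r) (A : Subgroup G) [A.Normal] (hA : A.index = q) (f : MulAut G) (hf : f ^ r = 1)
    (hfA : ∀ x, f x ∈ A ↔ x ∈ A) (b : G) : f b * b⁻¹ ∈ A := by
  have := Fact.mk hq
  have hmap : A.map (f : G →* G) = A := by
    ext x
    rw [Subgroup.mem_map]
    constructor
    · rintro ⟨y, hy, rfl⟩
      exact (hfA y).2 hy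
    · intro hx
      exact ⟨f.symm x, by rw [← hfA]; simpa using hx, by simp⟩
  let g : MulAut (G ⧸ A) := QuotientGroup.congr A A f hmap
  have hgmk : ∀ (n : ℕ) (x : G), (g ^ n) (x : G ⧸ A) = ((f ^ n) x : G) := by
    intro n
    induction n with
    | zero => intro x; rfl
    | succ n ih => intro x; rw [pow_succ, pow_succ, MulAut.mul_apply, MulAut.mul_apply, ← ih]; rfl
  have hg : g ^ r = 1 := by
    ext x
    induction x using QuotientGroup.induction_on with
    | H x => rw [hgmk, hf]; rfl
  have hcard : Nat.card (G ⧸ A) = q := hA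
  have := isCyclic_of_prime_card hcard
  have h1 : g ^ (q - 1) = 1 := by
    rw [← Nat.totient_prime hq, ← hcard, ← IsCyclic.card_mulAut]
    exact pow_card_eq_one'
  have hcop : Nat.gcd r (q - 1) = 1 := by
    refine (Nat.Prime.coprime_iff_not_dvd hr).2 fun h => ?_
    have := Nat.le_of_dvd (by have := hq.two_le; omega) h
    have := hq.two_le
    omega
  have hg1 : g = 1 := by
    have := pow_gcd_eq_one.2 ⟨hg, h1⟩
    rwa [hcop, pow_one] at this
  have h2 := hgmk 1 b
  rw [pow_one, pow_one, hg1, MulAut.one_apply] at h2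
  rw [← div_eq_mul_inv]
  exact QuotientGroup.eq_iff_div_mem.1 h2.symm

/-- As `A` is abelian and `f b ∈ A b`, the fixed points of `f` in `A` form a subgroup normalised by
`b`. By irreducibility its order is not `p`, so it is all of `A` once it is nontrivial. -/
theorem fixes_of_fixes_one {G : Type*} [Group G] [Finite G] {p : ℕ} (hp : p.Prime)
    (A : Subgroup G) [A.Normal] (hAcard : Nat.card A = p ^ 2) (hel : ∀ x ∈ A, x ^ p = 1) (b : G)
    (hirr : ∀ x ∈ A, b⁻¹ * x * b ∈ Subgroup.zpowers x → x = 1)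
    (hcomm : ∀ x ∈ A, ∀ y ∈ A, x * y = y * x) (f : MulAut G) (hfb : f b * b⁻¹ ∈ A)
    {x₀ : G} (hx₀ : x₀ ∈ A) (hne : x₀ ≠ 1) (hfix : f x₀ = x₀) : ∀ x ∈ A, f x = x := by
  have := Fact.mk hp
  let F : Subgroup G := A ⊓ (f : G →* G).eqLocus (MonoidHom.id G)
  have hF : ∀ x, x ∈ F ↔ x ∈ A ∧ f x = x := fun x => Iff.rfl
  have hy : b⁻¹ * x₀ * b ∈ F := by
    have hyA : b⁻¹ * x₀ * b ∈ A := by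
      simpa using (inferInstance : A.Normal).conj_mem x₀ hx₀ b⁻¹
    refine (hF _).2 ⟨hyA, ?_⟩
    obtain ⟨c, hc⟩ : ∃ c, c = f b * b⁻¹ := ⟨_, rfl⟩
    have hfb' : f b = c * b := by rw [hc]; group
    have h3 := hcomm _ (hc ▸ hfb) _ hx₀
    rw [map_mul, map_mul, map_inv, hfix, hfb']
    calc (c * b)⁻¹ * x₀ * (c * b) = b⁻¹ * (c⁻¹ * (x₀ * c)) * b := by group
      _ = b⁻¹ * x₀ * b := by rw [← h3]; group
  have hZF : Subgroup.zpowers x₀ ≤ F := by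
    rw [Subgroup.zpowers_le]
    exact (hF _).2 ⟨hx₀, hfix⟩
  have hZ : Nat.card (Subgroup.zpowers x₀) = p := by
    rw [Nat.card_zpowers, orderOf_eq_prime (hel _ hx₀) hne]
  obtain ⟨k, hk, hFk⟩ := (Nat.dvd_prime_pow hp).1
    (hAcard ▸ Subgroup.card_dvd_of_le (inf_le_left : F ≤ A))
  have hpF : p ≤ Nat.card F := hZ ▸ Nat.le_of_dvd Nat.card_pos (Subgroup.card_dvd_of_le hZF)
  have hk2 : k = 2 := by
    interval_cases k
    · have := hp.two_le
      have h1 : p ≤ 1 := hpF.trans hFk.le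
      omega
    · have hEq : Subgroup.zpowers x₀ = F :=
        Subgroup.eq_of_le_of_card_ge hZF (by rw [hZ, hFk, pow_one])
      exact absurd (hirr x₀ hx₀ (hEq ▸ hy)) hne
    · rfl
  have hFA : F = A := Subgroup.eq_of_le_of_card_ge inf_le_left (by rw [hAcard, hFk, hk2])
  intro x hx
  rw [← hFA] at hx
  exact ((hF x).1 hx).2

/-- The values of a gamma function `γ` form a subgroup. The injection
`x ↦ γ h x * h` carries the fibre over `s` into the fibre over `s * γ h`, so all nonempty fibres have equally many elements. -/
theorem exists_image_subgroup {G : Type*} [Group G] [Finite G] (γ : G → MulAut G)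
    (hγ : ∀ g h : G, γ (γ h g * h) = γ g * γ h) :
    ∃ S : Subgroup (MulAut G), Nat.card {g : G | γ g = 1} * Nat.card S = Nat.card G := by
  classical
  have := Fintype.ofFinite G
  have := Fintype.ofFinite (MulAut G)
  have hγ1 : γ 1 = 1 := by
    have := hγ 1 1
    simpa using this
  let S₀ : Submonoid (MulAut G) :=
    { carrier := Set.range γ
      mul_mem' := by
        rintro _ _ ⟨g, rfl⟩ ⟨h, rfl⟩
        exact ⟨_, hγ g h⟩
      one_mem' := ⟨1, hγ1⟩ }
  let S : Subgroup (MulAut G) :=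
    { S₀ with
      inv_mem' := by
        intro x hx
        have h : x⁻¹ ∈ Submonoid.powers x := by
          rw [(isOfFinOrder_of_finite x).mem_powers_iff_mem_zpowers]
          exact inv_mem (Subgroup.mem_zpowers x)
        exact (Submonoid.powers_le.2 hx : Submonoid.powers x ≤ S₀) h }
  have hS : ∀ s, s ∈ S ↔ ∃ g, γ g = s := fun s => Iff.rfl
  have hle : ∀ s h, (Finset.univ.filter fun g => γ g = s).card ≤
      (Finset.univ.filter fun g => γ g = s * γ h).card := by
    intro s h
    refine Finset.card_le_card_of_injOn (fun x => γ h x * h) ?_ ?_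
    · intro x hx
      simp only [Finset.coe_filter, Finset.mem_univ, true_and, Set.mem_ofPred_eq] at hx ⊢
      rw [hγ, hx]
    · intro x _ y _ hxy
      exact (γ h).injective (mul_right_cancel hxy)
  have hfib : ∀ s ∈ S, (Finset.univ.filter fun g => γ g = s).card =
      (Finset.univ.filter fun g => γ g = 1).card := by
    intro s hs
    obtain ⟨h, hh⟩ := (hS s).1 hs
    obtain ⟨k, hk⟩ := (hS s⁻¹).1 (inv_mem hs)
    apply le_antisymm
    · simpa [hk] using hle s k
    · simpa [hh] using hle 1 h
  refine ⟨S, ?_⟩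
  have h1 := Finset.card_eq_sum_card_fiberwise (f := γ) (s := Finset.univ)
    (t := Finset.univ.filter (· ∈ S)) (by
      intro g _
      simpa using (hS _).2 ⟨g, rfl⟩)
  rw [Finset.sum_congr rfl (fun s hs => hfib s (by simpa using hs)), Finset.sum_const,
    smul_eq_mul, Finset.card_univ, ← Nat.card_eq_fintype_card] at h1
  rw [h1, mul_comm]
  congr 1
  · exact (Nat.card_eq_fintype_card (α := S)).trans (Fintype.card_subtype _)
  · exact (Nat.card_eq_fintype_card (α := {g : G // γ g = 1})).trans (Fintype.card_subtype _)


/-- For `G` of type 10 — i.e. `G = (C_p × C_p) ⋊ C_q` of order `p²q` with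
`q ∣ p + 1`, `q > 2`, where the generator `b` of order `q` acts on the
elementary abelian normal subgroup `A` with no invariant line — there is no
gamma function `γ` on `G` whose kernel has exactly `p` elements. -/
theorem stmt19 {G : Type*} [Group G] [Fintype G] {p q : ℕ}
    (hp : p.Prime) (hq : q.Prime) (hp2 : 2 < p) (hq2 : 2 < q)
    (hqp : q ∣ p + 1)
    (hcard : Fintype.card G = p ^ 2 * q)
    (A : Subgroup G) [A.Normal]
    (hAcard : Nat.card A = p ^ 2) (hel : ∀ x ∈ A, x ^ p = 1)
    (b : G) (hb : orderOf b = q)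
    (hgen : Subgroup.closure ((A : Set G) ∪ {b}) = ⊤)
    (hirr : ∀ x ∈ A, b⁻¹ * x * b ∈ Subgroup.zpowers x → x = 1) :
    ¬ ∃ γ : G → MulAut G,
        (∀ g h : G, γ (γ h g * h) = γ g * γ h) ∧
        Nat.card {g : G | γ g = 1} = p := by
  rintro ⟨γ, hγ, hker⟩
  have := Fact.mk hp
  have := Fact.mk hq
  rw [← Nat.card_eq_fintype_card] at hcard
  have hlt : q < p := by
    obtain ⟨k, hk⟩ := hqp
    have hpo := hp.eq_two_or_odd
    have hqo := hq.eq_two_or_odd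
    have hk2 : 2 ≤ k := by
      rcases k with _ | _ | k <;> omega
    have := Nat.mul_le_mul_left q hk2
    omega
  have hmod : ¬ p ≡ 1 [MOD q] := by
    intro h
    have h2 : 0 ≡ 2 [MOD q] :=
      (Nat.modEq_zero_iff_dvd.2 hqp).symm.trans (Nat.ModEq.add_right 1 h)
    exact absurd (Nat.le_of_dvd two_pos (Nat.modEq_zero_iff_dvd.1 h2.symm)) (by omega)
  have hcop : Nat.gcd p q = 1 := (Nat.coprime_primes hp hq).2 hlt.ne'
  obtain ⟨S, hS⟩ := exists_image_subgroup γ hγ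
  have hScard : Nat.card S = p * q := by
    rw [hker, hcard, sq, mul_assoc] at hS
    exact Nat.eq_of_mul_eq_mul_left hp.pos hS
  obtain ⟨⟨σ, hσS⟩, ⟨β, hβS⟩, hσ, hβ, hσβ⟩ := exists_commuting hp hq hlt hmod hScard
  rw [Subgroup.orderOf_mk] at hσ hβ
  replace hσβ : σ * β = β * σ := congrArg Subtype.val hσβ
  have hindex : A.index = q := by
    have h := A.card_mul_index
    rw [hAcard, hcard] at h
    exact Nat.eq_of_mul_eq_mul_left (pow_pos hp.pos 2) h
  have hcomm : ∀ x ∈ A, ∀ y ∈ A, x * y = y * x := fun x hx y hy =>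
    congrArg Subtype.val
      ((IsPGroup.isMulCommutative_of_card_eq_prime_sq hAcard).is_comm.comm ⟨x, hx⟩ ⟨y, hy⟩)
  -- `A` is the `p`-torsion of `G`, because `G ⧸ A` has order prime to `p`; so it is characteristic.
  have hmem : ∀ x, x ∈ A ↔ x ^ p = 1 := by
    refine fun x => ⟨hel x, fun hx => ?_⟩
    rw [← QuotientGroup.eq_one_iff]
    have h1 : (x : G ⧸ A) ^ p = 1 := by rw [← QuotientGroup.mk_pow, hx, QuotientGroup.mk_one]
    have h2 : (x : G ⧸ A) ^ q = 1 := by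
      rw [← hindex, Subgroup.index]
      exact pow_card_eq_one'
    have := pow_gcd_eq_one.2 ⟨h1, h2⟩
    rwa [hcop, pow_one] at this
  have hchar : ∀ (f : MulAut G) (x : G), f x ∈ A ↔ x ∈ A := fun f x => by
    rw [hmem, hmem, ← map_pow, EmbeddingLike.map_eq_one_iff]
  have hext : ∀ f : MulAut G, (∀ x ∈ A, f x = x) → f b = b → f = 1 := by
    intro f hfA hfb
    have : (f : G →* G) = MonoidHom.id G := by
      refine MonoidHom.eq_of_eqOn_dense hgen ?_
      rintro x (hx | rfl)
      · exact hfA x hx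
      · exact hfb
    ext x
    exact DFunLike.congr_fun this x
  have hσp : σ ^ p = 1 := hσ ▸ pow_orderOf_eq_one σ
  have hβq : β ^ q = 1 := hβ ▸ pow_orderOf_eq_one β
  have haA := apply_mul_inv_mem hq hp hlt.le A hindex σ hσp (hchar σ) b
  have hcA := apply_mul_inv_mem hq hq le_rfl A hindex β hβq (hchar β) b
  obtain ⟨x₀, hx₀, hx₀1, hx₀f⟩ := exists_fixed_ne_one hp A σ hσp (hchar σ) (by
    rw [hAcard]
    intro h
    have h0 : p ^ 2 ≡ 0 [MOD p] := Nat.modEq_zero_iff_dvd.2 (dvd_pow_self p two_ne_zero)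
    exact hp.one_lt.ne' (Nat.dvd_one.1 (Nat.modEq_zero_iff_dvd.1 (h.symm.trans h0))))
  have hσA := fixes_of_fixes_one hp A hAcard hel b hirr hcomm σ haA hx₀ hx₀1 hx₀f
  obtain ⟨a, ha⟩ : ∃ a, a = σ b * b⁻¹ := ⟨_, rfl⟩
  obtain ⟨c, hc⟩ : ∃ c, c = β b * b⁻¹ := ⟨_, rfl⟩
  have hσb : σ b = a * b := by rw [ha]; group
  have hβb : β b = c * b := by rw [hc]; group
  have ha1 : a ≠ 1 := by
    rintro h
    have h1 : σ = 1 := hext σ hσA (by rw [hσb, h, one_mul])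
    rw [h1, orderOf_one] at hσ
    exact hp.one_lt.ne hσ
  have hβa : β a = a := by
    have h1 := DFunLike.congr_fun hσβ b
    rw [MulAut.mul_apply, MulAut.mul_apply, hσb, hβb, map_mul, map_mul, hσb, hβb,
      hσA c (hc ▸ hcA), ← mul_assoc, ← mul_assoc, hcomm c (hc ▸ hcA) a (ha ▸ haA)] at h1
    exact (mul_right_cancel (mul_right_cancel h1)).symm
  have hβA := fixes_of_fixes_one hp A hAcard hel b hirr hcomm β hcA (ha ▸ haA) ha1 hβa
  have hpow : ∀ n : ℕ, (β ^ n) b = c ^ n * b := by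
    intro n
    induction n with
    | zero => simp
    | succ n ih =>
      rw [pow_succ', MulAut.mul_apply, ih, map_mul, map_pow, hβA c (hc ▸ hcA), hβb, pow_succ,
        mul_assoc]
  have hcq : c ^ q = 1 := by
    have h1 := hpow q
    rw [hβq, MulAut.one_apply] at h1
    exact right_eq_mul.1 h1
  have hc1 : c = 1 := by
    have := pow_gcd_eq_one.2 ⟨hel c (hc ▸ hcA), hcq⟩
    rwa [hcop, pow_one] at this
  have h1 : β = 1 := hext β hβA (by rw [hβb, hc1, one_mul])
  rw [h1, orderOf_one] at hβ
  exact hq.one_lt.ne hβ
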